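/- arXiv:2010.15204 — 2 statements merged into one kernel-verified Lean document; each statement's English description precedes it below -/
import Mathlib

section
/- Let γ : [a,b] → S² ⊂ ℝ³ be a closed constant-speed curve of length L(γ) = 4π/√2 such that every point of S² has spherical distance at most π/4 from the image of γ. Then for almost every p ∈ S² (with respect to the surface measure), the circle C_{π/4}(p) meets γ in exactly two parameters, i.e. #{t ∈ [a,b) : d(γ(t), p) = π/4} = 2. -/
open MeasureTheory Set Real
open scoped ENNReal NNReal RealInnerProductSpace

noncomputable section

abbrev E3 := EuclideanSpace ℝ (Fin 3)

/-!
For a curve `γ` on the sphere let `N(p)` be the number of parameters at which `γ` is at distance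
`ρ` from `p`. Crofton's formula says that the integral of `N` over the sphere is `4 sin ρ` times the
length of `γ`; only the upper bound is needed. Here `N` is estimated by the number of sign changes
of `t ↦ ⟪γ t, w⟫ - cos ρ * ‖w‖` along fine partitions. A change between consecutive points `u`, `v`
of the partition means that `w` lies in the symmetric difference of the cones over the caps of
radius `ρ` about `u` and `v`. In cylindrical coordinates around the axis orthogonal to `u` and `v`
the two cones cut every circle in arcs shifted by the angle between `u` and `v`, which bounds the
volume of that set, and Fatou's lemma passes to the limit.

Conversely, every point and its antipode are within `ρ` of the closed curve, so the function above
is somewhere nonnegative and somewhere nonpositive, and for almost every `w` its zeros are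
crossings: a touching would make the maximum or minimum of the function over some interval with
rational endpoints equal to zero, and such an extremum is strictly monotone in `w` along a suitable
direction. Hence `N ≥ 2` almost everywhere. The length `2π / sin ρ` makes the mean of `N` at most
`2`, which forces `N = 2` almost everywhere.
-/

open InnerProductGeometry Filter Metric
open scoped Topology symmDiff

/-! ### Cones over spherical caps -/

variable {E : Type*} [NormedAddCommGroup E] [InnerProductSpace ℝ E]

/-- The signed defect of `w` from the cone over the circle of spherical radius `ρ` about the unit
vector `u`: for `w ≠ 0` it is positive, zero or negative according as the angle between `u` and `w`
is less than, equal to or greater than `ρ`. Working with cones instead of subsets of the sphere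
lets Lebesgue measure on the unit ball stand in for the surface measure. -/
def capGap (ρ : ℝ) (u w : E) : ℝ := ⟪u, w⟫ - cos ρ * ‖w‖

/-- The open solid cone over the spherical cap of radius `ρ` about the unit vector `u`. -/
def capCone (ρ : ℝ) (u : E) : Set E := {w | 0 < capGap ρ u w}

lemma capGap_smul (ρ : ℝ) (u w : E) {r : ℝ} (hr : 0 ≤ r) :
    capGap ρ u (r • w) = r * capGap ρ u w := by
  simp only [capGap, inner_smul_right, norm_smul, norm_of_nonneg hr]
  ring

lemma continuous_capGap (ρ : ℝ) : Continuous fun x : E × E => capGap ρ x.1 x.2 := by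
  unfold capGap
  fun_prop

lemma continuousOn_capGap_comp (ρ : ℝ) {γ : ℝ → E} {s : Set ℝ} (hγ : ContinuousOn γ s) (w : E) :
    ContinuousOn (fun t => capGap ρ (γ t) w) s :=
  (continuous_capGap ρ).comp_continuousOn (hγ.prodMk continuousOn_const)

lemma isOpen_capCone (ρ : ℝ) (u : E) : IsOpen (capCone ρ u) :=
  isOpen_lt continuous_const ((continuous_capGap ρ).comp (Continuous.prodMk_right u))

lemma measurableSet_capCone_symmDiff [MeasurableSpace E] [OpensMeasurableSpace E] (ρ : ℝ)
    (u v : E) : MeasurableSet (capCone ρ u ∆ capCone ρ v) :=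
  (isOpen_capCone ρ u).measurableSet.symmDiff (isOpen_capCone ρ v).measurableSet

lemma arccos_inner_eq_iff {ρ : ℝ} (hρ : ρ ∈ Icc 0 π) {u p : E} (hu : ‖u‖ = 1) (hp : ‖p‖ = 1) :
    arccos ⟪u, p⟫ = ρ ↔ capGap ρ u p = 0 := by
  have hup : |⟪u, p⟫| ≤ 1 := by simpa only [hu, hp, mul_one] using abs_real_inner_le_norm u p
  rw [capGap, hp, mul_one, sub_eq_zero]
  constructor
  · rintro rfl
    rw [cos_arccos (abs_le.1 hup).1 (abs_le.1 hup).2]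
  · intro h
    rw [h, arccos_cos hρ.1 hρ.2]

lemma capGap_nonneg_of_arccos_inner_le {ρ : ℝ} (hρ : ρ ≤ π) {u p : E} (hu : ‖u‖ = 1)
    (hp : ‖p‖ = 1) (h : arccos ⟪p, u⟫ ≤ ρ) : 0 ≤ capGap ρ u p := by
  have hup : |⟪p, u⟫| ≤ 1 := by simpa only [hu, hp, mul_one] using abs_real_inner_le_norm p u
  rw [capGap, hp, mul_one, sub_nonneg, real_inner_comm,
    ← cos_arccos (abs_le.1 hup).1 (abs_le.1 hup).2]
  exact cos_le_cos_of_nonneg_of_le_pi (arccos_nonneg _) hρ h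

/-! ### Volume of the symmetric difference of two cones -/

lemma cos_nonneg_of_mem_Ioc {ρ : ℝ} (hρ : ρ ∈ Ioc 0 (π / 2)) : 0 ≤ cos ρ :=
  cos_nonneg_of_neg_pi_div_two_le_of_le (by linarith [hρ.1, pi_pos]) hρ.2

lemma sin_pos_of_mem_Ioc {ρ : ℝ} (hρ : ρ ∈ Ioc 0 (π / 2)) : 0 < sin ρ :=
  sin_pos_of_pos_of_lt_pi hρ.1 (by linarith [hρ.2, pi_pos])

lemma lt_cos_iff_abs_lt_arccos {k x : ℝ} (hk : 0 ≤ k) (hx : |x| ≤ 3 * π / 2) :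
    k < cos x ↔ |x| < arccos k := by
  rw [← cos_abs]
  rcases le_or_gt |x| π with hxπ | hxπ
  · have hinv : arccos (cos |x|) = |x| := arccos_cos (abs_nonneg x) hxπ
    constructor <;> intro h
    · rw [← hinv]
      exact arccos_lt_arccos (by linarith) h (cos_le_one _)
    · contrapose! h
      rw [← hinv]
      exact arccos_le_arccos h
  · have hcos : cos |x| ≤ 0 := cos_nonpos_of_pi_div_two_le_of_le (by linarith) (by linarith)
    have harc : arccos k ≤ π / 2 := arccos_le_pi_div_two.2 hk
    exact iff_of_false (by linarith) (by linarith)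

lemma volume_symmDiff_Ioo_le (a b c d : ℝ) :
    volume (Ioo a b ∆ Ioo c d) ≤ ENNReal.ofReal |c - a| + ENNReal.ofReal |d - b| := by
  have hsub : Ioo a b ∆ Ioo c d ⊆ uIcc a c ∪ uIcc b d := by
    intro x hx
    simp only [mem_symmDiff, mem_Ioo, mem_union, mem_uIcc] at hx ⊢
    grind
  calc volume (Ioo a b ∆ Ioo c d) ≤ volume (uIcc a c) + volume (uIcc b d) :=
        (measure_mono hsub).trans (measure_union_le _ _)
    _ = _ := by rw [Real.volume_interval, Real.volume_interval]

lemma volume_xor_lt_cos_le {k θ : ℝ} (hk : 0 ≤ k) (hθ : |θ| ≤ π / 2) :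
    volume {φ ∈ Ioo (-π) π | Xor (k < cos φ) (k < cos (φ - θ))} ≤ ENNReal.ofReal (2 * |θ|) := by
  set β := arccos k
  have hsub : {φ ∈ Ioo (-π) π | Xor (k < cos φ) (k < cos (φ - θ))} ⊆
      Ioo (-β) β ∆ Ioo (θ - β) (θ + β) := by
    rintro φ ⟨hφ, h⟩
    have hφπ : |φ| < π := abs_lt.2 hφ
    rw [lt_cos_iff_abs_lt_arccos hk (by linarith [pi_pos]),
      lt_cos_iff_abs_lt_arccos hk ((abs_sub φ θ).trans (by linarith)), abs_lt, abs_sub_lt_iff] at h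
    change Xor (φ ∈ Ioo (-β) β) (φ ∈ Ioo (θ - β) (θ + β))
    grind [Xor]
  refine (measure_mono hsub).trans ((volume_symmDiff_Ioo_le _ _ _ _).trans_eq ?_)
  rw [← ENNReal.ofReal_add (abs_nonneg _) (abs_nonneg _)]
  ring_nf

/-- The point of `E3` with cylindrical coordinates `(r, φ, z)`. -/
def cylindrical (r φ z : ℝ) : E3 := !₂[r * cos φ, r * sin φ, z]

lemma volume_eq_lintegral_cylindrical {A : Set E3} (hA : MeasurableSet A) :
    volume A = ∫⁻ z : ℝ, ∫⁻ r in Ioi (0 : ℝ), ENNReal.ofReal r *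
      volume {φ ∈ Ioo (-π) π | cylindrical r φ z ∈ A} := by
  have hcoord : MeasurePreserving (fun w : E3 => ((w 2, (w 0, w 1)) : ℝ × ℝ × ℝ)) :=
    ((MeasurePreserving.id volume).prod (volume_preserving_finTwoArrow ℝ)).comp
      ((volume_preserving_piFinSuccAbove (fun _ : Fin 3 => ℝ) 2).comp
        (PiLp.volume_preserving_ofLp (Fin 3)))
  have hmeas : Measurable fun q : ℝ × ℝ × ℝ => (!₂[q.2.1, q.2.2, q.1] : E3) := by
    fun_prop
  have hpre : A = (fun w : E3 => ((w 2, (w 0, w 1)) : ℝ × ℝ × ℝ)) ⁻¹'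
      ((fun q : ℝ × ℝ × ℝ => (!₂[q.2.1, q.2.2, q.1] : E3)) ⁻¹' A) := by
    ext w
    have hw : (!₂[w 0, w 1, w 2] : E3) = w := by ext i; fin_cases i <;> rfl
    simp only [mem_preimage, hw]
  conv_lhs => rw [hpre]
  rw [hcoord.measure_preimage (hmeas hA).nullMeasurableSet, Measure.volume_eq_prod,
    Measure.prod_apply (hmeas hA)]
  refine lintegral_congr fun z => ?_
  have hslice : Measurable fun x : ℝ × ℝ => (!₂[x.1, x.2, z] : E3) := by fun_prop
  have hpolar : Measurable fun x : ℝ × ℝ => (!₂[x.1 * cos x.2, x.1 * sin x.2, z] : E3) := by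
    fun_prop
  have hind : MeasurableSet ((fun x : ℝ × ℝ => (!₂[x.1, x.2, z] : E3)) ⁻¹' A) := hslice hA
  change volume ((fun x : ℝ × ℝ => (!₂[x.1, x.2, z] : E3)) ⁻¹' A) = _
  rw [← lintegral_indicator_one hind, ← lintegral_comp_polarCoord_symm, polarCoord_target,
    Measure.volume_eq_prod, ← Measure.prod_restrict, lintegral_prod]
  · refine lintegral_congr fun r => ?_
    have harc : MeasurableSet {φ | cylindrical r φ z ∈ A} :=
      (hpolar.comp measurable_prodMk_left) hA
    simp only [smul_eq_mul]
    rw [lintegral_const_mul' _ _ ENNReal.ofReal_ne_top]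
    congr 1
    rw [← ofPred_inter_eq_sep, ← Measure.restrict_apply' measurableSet_Ioo]
    exact lintegral_indicator_one harc
  · exact (measurable_fst.ennreal_ofReal.mul
      (measurable_one.indicator (hpolar hA))).aemeasurable

lemma setLIntegral_ofReal_Icc_le {α : ℝ} (hα : 0 ≤ α) (β : ℝ) :
    ∫⁻ r in Icc α β, ENNReal.ofReal r ≤ ENNReal.ofReal ((β ^ 2 - α ^ 2) / 2) := by
  rcases le_or_gt α β with hle | hlt
  · rw [← integral_id, intervalIntegral.integral_of_le hle, ← integral_Icc_eq_integral_Ioc,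
      ofReal_integral_eq_lintegral_ofReal (f := fun r => r) continuous_id.integrableOn_Icc]
    filter_upwards [ae_restrict_mem measurableSet_Icc] with r hr using hα.trans hr.1
  · simp only [Icc_eq_empty hlt.not_ge, Measure.restrict_empty, lintegral_zero_measure, zero_le]

lemma lintegral_ofReal_one_sub_div_sq {s : ℝ} (hs : 0 < s) :
    ∫⁻ z, ENNReal.ofReal (1 - (z / s) ^ 2) = ENNReal.ofReal (4 / 3 * s) := by
  have hsq (z : ℝ) : z ∈ Icc (-s) s ↔ 0 ≤ 1 - (z / s) ^ 2 := by
    rw [mem_Icc, ← abs_le, sub_nonneg, sq_le_one_iff_abs_le_one, abs_div, abs_of_pos hs,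
      div_le_one hs]
  have hsupp : ∫⁻ z, ENNReal.ofReal (1 - (z / s) ^ 2) =
      ∫⁻ z in Icc (-s) s, ENNReal.ofReal (1 - (z / s) ^ 2) := by
    refine (setLIntegral_eq_of_support_subset fun z hz => ?_).symm
    rw [hsq]
    exact (ENNReal.ofReal_pos.1 (pos_iff_ne_zero.2 hz)).le
  rw [hsupp, ← ofReal_integral_eq_lintegral_ofReal
    (Continuous.integrableOn_Icc (by fun_prop)), integral_Icc_eq_integral_Ioc,
    ← intervalIntegral.integral_of_le (by linarith)]
  · congr 1
    simp_rw [div_pow]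
    rw [intervalIntegral.integral_sub (by simp)
      (Continuous.intervalIntegrable (by fun_prop) _ _), intervalIntegral.integral_div,
      integral_pow, intervalIntegral.integral_const]
    simp only [smul_eq_mul]
    field_simp
    ring
  · filter_upwards [ae_restrict_mem measurableSet_Icc] with z hz using (hsq z).1 hz

lemma norm_cylindrical (r φ z : ℝ) :
    ‖cylindrical r φ z‖ = √(r ^ 2 + z ^ 2) := by
  rw [cylindrical, EuclideanSpace.norm_eq, Fin.sum_univ_three]
  congr 1
  simp only [norm_eq_abs, sq_abs, Matrix.cons_val]
  linear_combination r ^ 2 * sin_sq_add_cos_sq φ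

lemma capGap_cylindrical (ρ θ r φ z : ℝ) :
    capGap ρ (cylindrical 1 θ 0) (cylindrical r φ z) =
      r * cos (φ - θ) - cos ρ * √(r ^ 2 + z ^ 2) := by
  rw [capGap, norm_cylindrical, PiLp.inner_apply, Fin.sum_univ_three, cos_sub]
  simp only [cylindrical, RCLike.inner_apply, conj_trivial, Matrix.cons_val]
  linear_combination

lemma volume_arc_capCone_symmDiff_le {ρ θ r z : ℝ} (hρ : ρ ∈ Ioc 0 (π / 2)) (hθ : |θ| ≤ π / 2)
    (hr : 0 < r) :
    volume {φ ∈ Ioo (-π) π | cylindrical r φ z ∈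
      ball (0 : E3) 1 ∩ capCone ρ (cylindrical 1 0 0) ∆ capCone ρ (cylindrical 1 θ 0)} ≤
    (Icc (cos ρ * |z| / sin ρ) √(1 - z ^ 2)).indicator (fun _ => ENNReal.ofReal (2 * |θ|)) r := by
  set A := {φ ∈ Ioo (-π) π | cylindrical r φ z ∈
    ball (0 : E3) 1 ∩ capCone ρ (cylindrical 1 0 0) ∆ capCone ρ (cylindrical 1 θ 0)}
  have hcos : 0 ≤ cos ρ := cos_nonneg_of_mem_Ioc hρ
  have hsin : 0 < sin ρ := sin_pos_of_mem_Ioc hρ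
  set k := cos ρ * √(r ^ 2 + z ^ 2) / r
  have hcone (θ φ : ℝ) : cylindrical r φ z ∈ capCone ρ (cylindrical 1 θ 0) ↔
      k < cos (φ - θ) := by
    rw [capCone, mem_ofPred_eq, capGap_cylindrical, sub_pos, div_lt_iff₀' hr]
  have hA : A ⊆ {φ ∈ Ioo (-π) π | Xor (k < cos φ) (k < cos (φ - θ))} := by
    rintro φ ⟨hφ, -, h⟩
    refine ⟨hφ, ?_⟩
    rwa [← hcone θ, ← sub_zero φ, ← hcone 0, sub_zero]
  rcases A.eq_empty_or_nonempty with hempty | ⟨φ, hφ⟩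
  · rw [hempty, measure_empty]
    exact zero_le
  · have hk1 : k < 1 := (hA hφ).2.elim (fun h => h.1.trans_le (cos_le_one _))
      (fun h => h.1.trans_le (cos_le_one _))
    have hball : √(r ^ 2 + z ^ 2) < 1 := by
      rw [← norm_cylindrical r φ z]
      exact mem_ball_zero_iff.1 hφ.2.1
    rw [indicator_of_mem]
    · exact (measure_mono hA).trans (volume_xor_lt_cos_le (by positivity) hθ)
    · constructor
      · rw [div_lt_one hr, ← sqrt_sq hcos, ← sqrt_mul (sq_nonneg _), sqrt_lt' hr] at hk1
        rw [div_le_iff₀ hsin]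
        refine abs_le_of_sq_le_sq' ?_ (by positivity) |>.2
        rw [mul_pow, sq_abs, mul_pow]
        nlinarith [sin_sq_add_cos_sq ρ]
      · rw [sqrt_lt' one_pos] at hball
        exact le_sqrt_of_sq_le (by linarith)

lemma lintegral_slice_capCone_symmDiff_le {ρ θ : ℝ} (hρ : ρ ∈ Ioc 0 (π / 2)) (hθ : |θ| ≤ π / 2)
    (z : ℝ) :
    ∫⁻ r in Ioi (0 : ℝ), ENNReal.ofReal r *
      volume {φ ∈ Ioo (-π) π | cylindrical r φ z ∈
        ball (0 : E3) 1 ∩ capCone ρ (cylindrical 1 0 0) ∆ capCone ρ (cylindrical 1 θ 0)} ≤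
    ENNReal.ofReal |θ| * ENNReal.ofReal (1 - (z / sin ρ) ^ 2) := by
  have hcos : 0 ≤ cos ρ := cos_nonneg_of_mem_Ioc hρ
  have hsin : 0 < sin ρ := sin_pos_of_mem_Ioc hρ
  set α := cos ρ * |z| / sin ρ
  set β := √(1 - z ^ 2)
  have hα : 0 ≤ α := by positivity
  calc _ ≤ ∫⁻ r in Ioi (0 : ℝ), (Icc α β).indicator
          (fun r => ENNReal.ofReal (2 * |θ|) * ENNReal.ofReal r) r := by
        refine setLIntegral_mono' measurableSet_Ioi fun r hr => ?_
        rw [indicator_mul_left, mul_comm]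
        gcongr
        exact volume_arc_capCone_symmDiff_le hρ hθ hr
    _ ≤ ENNReal.ofReal (2 * |θ|) * ∫⁻ r in Icc α β, ENNReal.ofReal r := by
        rw [← lintegral_const_mul' _ _ ENNReal.ofReal_ne_top,
          ← lintegral_indicator measurableSet_Icc]
        exact setLIntegral_le_lintegral _ _
    _ ≤ ENNReal.ofReal (2 * |θ|) * ENNReal.ofReal ((β ^ 2 - α ^ 2) / 2) := by
        gcongr
        exact setLIntegral_ofReal_Icc_le hα β
    _ ≤ ENNReal.ofReal |θ| * ENNReal.ofReal (1 - (z / sin ρ) ^ 2) := by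
        rw [← ENNReal.ofReal_mul (by positivity), ← ENNReal.ofReal_mul (by positivity)]
        rcases le_total (z ^ 2) 1 with hz | hz
        · refine (congrArg ENNReal.ofReal ?_).le
          rw [sq_sqrt (sub_nonneg.2 hz), div_pow, mul_pow, sq_abs, cos_sq']
          field_simp
          ring
        · rw [show β = 0 from sqrt_eq_zero_of_nonpos (sub_nonpos.2 hz)]
          refine (ENNReal.ofReal_of_nonpos ?_).trans_le zero_le
          nlinarith [mul_nonneg (abs_nonneg θ) (sq_nonneg α)]

lemma volume_ball_inter_capCone_symmDiff_rotation_le {ρ θ : ℝ} (hρ : ρ ∈ Ioc 0 (π / 2))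
    (hθ : |θ| ≤ π / 2) :
    volume (ball (0 : E3) 1 ∩ capCone ρ (cylindrical 1 0 0) ∆ capCone ρ (cylindrical 1 θ 0)) ≤
      ENNReal.ofReal (4 / 3 * sin ρ * |θ|) := by
  have hsin : 0 < sin ρ := sin_pos_of_mem_Ioc hρ
  rw [volume_eq_lintegral_cylindrical
    (measurableSet_ball.inter (measurableSet_capCone_symmDiff ρ _ _))]
  refine (lintegral_mono fun z => lintegral_slice_capCone_symmDiff_le hρ hθ z).trans_eq ?_
  rw [lintegral_const_mul' _ _ ENNReal.ofReal_ne_top, lintegral_ofReal_one_sub_div_sq hsin,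
    ← ENNReal.ofReal_mul (abs_nonneg θ), mul_comm]

open InnerProductSpace in
lemma exists_orthonormalBasis_repr_pair {u v : E3} (hu : ‖u‖ = 1) (hv : ‖v‖ = 1) :
    ∃ (b : OrthonormalBasis (Fin 3) ℝ E3) (θ : ℝ), |θ| = angle u v ∧
      b.repr u = cylindrical 1 0 0 ∧ b.repr v = cylindrical 1 θ 0 := by
  let b := gramSchmidtOrthonormalBasis (𝕜 := ℝ) (by simp) ![u, v, 0]
  have hb0 : b 0 = u := by
    have hnormed : gramSchmidtNormed ℝ ![u, v, 0] 0 = u := by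
      have hfirst : gramSchmidt ℝ ![u, v, 0] 0 = u := gramSchmidt_bot ℝ _
      simp [gramSchmidtNormed, hfirst, hu]
    rw [gramSchmidtOrthonormalBasis_apply, hnormed]
    rw [hnormed, ← norm_ne_zero_iff, hu]
    exact one_ne_zero
  have hv0 : b.repr v 0 = cos (angle u v) := by
    rw [b.repr_apply_apply, hb0, cos_angle, hu, hv, mul_one, div_one]
  have hv2 : b.repr v 2 = 0 := by
    rw [b.repr_apply_apply]
    exact gramSchmidtOrthonormalBasis_inv_triangular (i := 1) _ ![u, v, 0] (by decide)
  have hv1 : b.repr v 1 ^ 2 = sin (angle u v) ^ 2 := by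
    have hnorm : ‖b.repr v‖ ^ 2 = 1 := by rw [b.repr.norm_map, hv, one_pow]
    rw [EuclideanSpace.norm_sq_eq, Fin.sum_univ_three] at hnorm
    simp only [norm_eq_abs, sq_abs, hv0, hv2] at hnorm
    linarith [sin_sq_add_cos_sq (angle u v)]
  have hu' : b.repr u = cylindrical 1 0 0 := by
    rw [← hb0, b.repr_self]
    ext i
    fin_cases i <;> simp [cylindrical]
  rcases sq_eq_sq_iff_eq_or_eq_neg.1 hv1 with h | h
  · refine ⟨b, angle u v, abs_of_nonneg (angle_nonneg u v), hu', ?_⟩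
    ext i
    fin_cases i <;> simp [cylindrical, h, hv0, hv2]
  · refine ⟨b, -angle u v, by rw [abs_neg, abs_of_nonneg (angle_nonneg u v)], hu', ?_⟩
    ext i
    fin_cases i <;> simp [cylindrical, h, hv0, hv2]

lemma preimage_capCone {F : Type*} [NormedAddCommGroup F]
    [InnerProductSpace ℝ F] (e : E ≃ₗᵢ[ℝ] F) (ρ : ℝ) (u : E) :
    e ⁻¹' capCone ρ (e u) = capCone ρ u := by
  ext w
  simp only [capCone, capGap, mem_preimage, mem_ofPred_eq, e.inner_map_map, e.norm_map]

lemma volume_ball_inter_capCone_symmDiff_le {ρ : ℝ} (hρ : ρ ∈ Ioc 0 (π / 2)) {u v : E3}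
    (hu : ‖u‖ = 1) (hv : ‖v‖ = 1) (huv : angle u v ≤ π / 2) :
    volume (ball 0 1 ∩ capCone ρ u ∆ capCone ρ v) ≤
      ENNReal.ofReal (4 / 3 * sin ρ * angle u v) := by
  obtain ⟨b, θ, hθ, hbu, hbv⟩ := exists_orthonormalBasis_repr_pair hu hv
  have hpre : ball 0 1 ∩ capCone ρ u ∆ capCone ρ v = b.repr ⁻¹'
      (ball (0 : E3) 1 ∩ capCone ρ (cylindrical 1 0 0) ∆ capCone ρ (cylindrical 1 θ 0)) := by
    rw [← hbu, ← hbv, preimage_inter, preimage_symmDiff, preimage_capCone, preimage_capCone,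
      b.repr.preimage_ball, map_zero]
  rw [hpre, ← hθ]
  exact (b.measurePreserving_repr.measure_preimage_le _).trans
    (volume_ball_inter_capCone_symmDiff_rotation_le hρ (hθ.trans_le huv))

lemma norm_sub_eq_two_mul_sin_half_angle {u v : E} (hu : ‖u‖ = 1) (hv : ‖v‖ = 1) :
    ‖u - v‖ = 2 * sin (angle u v / 2) := by
  have hsin : 0 ≤ sin (angle u v / 2) :=
    sin_nonneg_of_nonneg_of_le_pi (by linarith [angle_nonneg u v])
      (by linarith [angle_le_pi u v, pi_pos])
  refine (sq_eq_sq₀ (norm_nonneg _) (by positivity)).1 ?_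
  rw [norm_sub_sq_real, mul_pow, sin_sq_eq_half_sub, mul_div_cancel₀ _ two_ne_zero, cos_angle, hu,
    hv]
  ring

lemma one_sub_sq_mul_angle_le_norm_sub {u v : E} (hu : ‖u‖ = 1) (hv : ‖v‖ = 1) :
    (1 - ‖u - v‖ ^ 2) * angle u v ≤ ‖u - v‖ := by
  have hα := angle_nonneg u v
  have hαπ := angle_le_pi u v
  have hchord := norm_sub_eq_two_mul_sin_half_angle hu hv
  set α := angle u v
  have hjordan : 2 / π * α ≤ ‖u - v‖ := by
    linarith [mul_le_sin (x := α / 2) (by linarith) (by linarith)]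
  have hcubic : α - α ^ 3 / 24 ≤ ‖u - v‖ := by
    rcases hα.eq_or_lt with h | h
    · simp [← h]
    · linarith [sin_gt_sub_cube (x := α / 2) (by linarith)]
  have hα2 : α ≤ 2 * ‖u - v‖ := by
    rw [div_mul_eq_mul_div, div_le_iff₀ pi_pos] at hjordan
    nlinarith [pi_lt_four, norm_nonneg (u - v)]
  have hsq : α ^ 2 ≤ (2 * ‖u - v‖) ^ 2 := pow_le_pow_left₀ hα hα2 2
  nlinarith [mul_le_mul_of_nonneg_left hsq hα, mul_nonneg hα (sq_nonneg ‖u - v‖)]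

lemma ofReal_one_sub_sq_mul_volume_capCone_symmDiff_le {ρ : ℝ} (hρ : ρ ∈ Ioc 0 (π / 2)) {u v : E3}
    (hu : ‖u‖ = 1) (hv : ‖v‖ = 1) :
    ENNReal.ofReal (1 - dist u v ^ 2) * volume (ball 0 1 ∩ capCone ρ u ∆ capCone ρ v) ≤
      ENNReal.ofReal (4 / 3 * sin ρ) * edist u v := by
  rcases le_or_gt 1 (dist u v) with hfar | hnear
  · rw [ENNReal.ofReal_of_nonpos (sub_nonpos.2 (one_le_pow₀ hfar)), zero_mul]
    exact zero_le
  have hsin : 0 < sin ρ := sin_pos_of_mem_Ioc hρ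
  have hangle : angle u v ≤ π / 2 := by
    rw [angle, arccos_le_pi_div_two, hu, hv, mul_one, div_one]
    have hchord := norm_sub_sq_real u v
    rw [← dist_eq_norm, hu, hv] at hchord
    nlinarith [dist_nonneg (x := u) (y := v)]
  have hfactor : 0 ≤ 1 - dist u v ^ 2 := sub_nonneg.2 (pow_le_one₀ dist_nonneg hnear.le)
  calc _ ≤ ENNReal.ofReal (1 - dist u v ^ 2) * ENNReal.ofReal (4 / 3 * sin ρ * angle u v) := by
        gcongr
        exact volume_ball_inter_capCone_symmDiff_le hρ hu hv hangle
    _ = ENNReal.ofReal (4 / 3 * sin ρ * ((1 - ‖u - v‖ ^ 2) * angle u v)) := by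
        rw [← ENNReal.ofReal_mul hfactor, dist_eq_norm]
        ring_nf
    _ ≤ ENNReal.ofReal (4 / 3 * sin ρ * dist u v) := by
        rw [dist_eq_norm]
        gcongr
        exact one_sub_sq_mul_angle_le_norm_sub hu hv
    _ = ENNReal.ofReal (4 / 3 * sin ρ) * edist u v := by
        rw [ENNReal.ofReal_mul (by positivity), edist_dist]

/-! ### Transversality at almost every point -/

section LevelSets

variable {V : Type*} [NormedAddCommGroup V] [NormedSpace ℝ V] [FiniteDimensional ℝ V]
  [MeasurableSpace V] [BorelSpace V] (μ : Measure V) [μ.IsAddHaarMeasure]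

open scoped Pointwise in
lemma ae_ne_of_injective_on_lines {F : V → ℝ} (hF : Measurable F) (v : V)
    (hinj : ∀ w, Function.Injective fun σ : ℝ => F (w + σ • v)) (c : ℝ) :
    ∀ᵐ w ∂μ, F w ≠ c := by
  suffices hnull : μ (F ⁻¹' {c}) = 0 from measure_eq_zero_iff_ae_notMem.1 hnull
  have hbounded : Bornology.IsBounded (range fun n : ℕ => (1 / ((n : ℝ) + 1)) • v) := by
    have hconv := tendsto_one_div_add_atTop_nhds_zero_nat (𝕜 := ℝ)
    exact isBounded_range_of_tendsto _ (hconv.smul_const v)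
  refine μ.addHaar_eq_zero_of_disjoint_translates _ hbounded ?_ (hF (measurableSet_singleton c))
  intro m n hmn
  refine disjoint_left.2 ?_
  simp only [singleton_add, mem_image]
  rintro _ ⟨w, hw, rfl⟩ ⟨w', hw', heq⟩
  refine hmn ?_
  have hww' : w + (1 / ((m : ℝ) + 1)) • v = w' + (1 / ((n : ℝ) + 1)) • v := by
    rw [add_comm w, ← heq, add_comm]
  have hw'_eq : w' = w + (1 / ((m : ℝ) + 1) - 1 / ((n : ℝ) + 1)) • v := by
    rw [sub_smul, ← add_sub_assoc, hww', add_sub_cancel_right]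
  have hσ : 1 / ((m : ℝ) + 1) - 1 / ((n : ℝ) + 1) = 0 := by
    refine hinj w ?_
    simp only [← hw'_eq, zero_smul, add_zero]
    exact hw'.trans hw.symm
  simpa [sub_eq_zero] using hσ

end LevelSets

lemma capGap_add_le {ρ : ℝ} (hρ : 0 ≤ cos ρ) (u w w' : E) :
    capGap ρ u w + capGap ρ u w' ≤ capGap ρ u (w + w') := by
  simp only [capGap, inner_add_right]
  nlinarith [norm_add_le w w']

lemma strictMono_capGap_on_lines {ρ : ℝ} (hρ : 0 ≤ cos ρ) {u v : E} (huv : 0 < capGap ρ u v)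
    (w : E) : StrictMono fun σ : ℝ => capGap ρ u (w + σ • v) := by
  intro σ τ hστ
  have hadd := capGap_add_le hρ u (w + σ • v) ((τ - σ) • v)
  rw [capGap_smul ρ u v (sub_pos.2 hστ).le, add_assoc, ← add_smul, add_sub_cancel] at hadd
  exact (lt_add_of_pos_right _ (mul_pos (sub_pos.2 hστ) huv)).trans_le hadd

section Transversality

variable [FiniteDimensional ℝ E] [MeasurableSpace E] [BorelSpace E] (μ : Measure E)
  [μ.IsAddHaarMeasure]

lemma ae_sSup_capGap_ne_zero {ρ : ℝ} (hρ : 0 ≤ cos ρ) {K : Set E} (hK : IsCompact K)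
    (hne : K.Nonempty) {v : E} (hv : ∀ q ∈ K, 0 < capGap ρ q v) :
    ∀ᵐ w ∂μ, sSup ((capGap ρ · w) '' K) ≠ 0 := by
  have hcont : Continuous fun w => sSup ((capGap ρ · w) '' K) :=
    hK.continuous_sSup ((continuous_capGap ρ).comp continuous_swap)
  refine ae_ne_of_injective_on_lines μ hcont.measurable v (fun w => StrictMono.injective ?_) 0
  intro σ τ hστ
  have hslice (w : E) : Continuous (capGap ρ · w) :=
    (continuous_capGap ρ).comp (Continuous.prodMk_left w)
  obtain ⟨q, hqK, hq⟩ := hK.exists_sSup_image_eq hne (hslice (w + σ • v)).continuousOn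
  calc sSup ((capGap ρ · (w + σ • v)) '' K) = capGap ρ q (w + σ • v) := hq
    _ < capGap ρ q (w + τ • v) := strictMono_capGap_on_lines hρ (hv q hqK) w hστ
    _ ≤ _ := le_csSup (hK.bddAbove_image (hslice _).continuousOn) (mem_image_of_mem _ hqK)

lemma ae_sInf_capGap_ne_zero {ρ : ℝ} (hρ : 0 ≤ cos ρ) {K : Set E} (hK : IsCompact K)
    (hne : K.Nonempty) {v : E} (hv : ∀ q ∈ K, 0 < capGap ρ q v) :
    ∀ᵐ w ∂μ, sInf ((capGap ρ · w) '' K) ≠ 0 := by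
  have hcont : Continuous fun w => sInf ((capGap ρ · w) '' K) :=
    hK.continuous_sInf ((continuous_capGap ρ).comp continuous_swap)
  refine ae_ne_of_injective_on_lines μ hcont.measurable v (fun w => StrictMono.injective ?_) 0
  intro σ τ hστ
  have hslice (w : E) : Continuous (capGap ρ · w) :=
    (continuous_capGap ρ).comp (Continuous.prodMk_left w)
  obtain ⟨q, hqK, hq⟩ := hK.exists_sInf_image_eq hne (hslice (w + τ • v)).continuousOn
  calc sInf ((capGap ρ · (w + σ • v)) '' K) ≤ capGap ρ q (w + σ • v) :=
        csInf_le (hK.bddBelow_image (hslice _).continuousOn) (mem_image_of_mem _ hqK)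
    _ < capGap ρ q (w + τ • v) := strictMono_capGap_on_lines hρ (hv q hqK) w hστ
    _ = _ := hq.symm

lemma ae_not_isExtrOn_capGap {ρ : ℝ} (hρ : 0 ≤ cos ρ) {K : Set E} (hK : IsCompact K)
    {v : E} (hv : ∀ q ∈ K, 0 < capGap ρ q v) :
    ∀ᵐ w ∂μ, ∀ q ∈ K, capGap ρ q w = 0 → ¬ IsExtrOn (capGap ρ · w) K q := by
  rcases K.eq_empty_or_nonempty with rfl | hne
  · simp
  filter_upwards [ae_sSup_capGap_ne_zero μ hρ hK hne hv, ae_sInf_capGap_ne_zero μ hρ hK hne hv]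
    with w hmax hmin q hq hzero hextr
  rcases hextr with hle | hge
  · refine hmin ?_
    rw [← hzero]
    exact IsLeast.csInf_eq ⟨mem_image_of_mem _ hq, forall_mem_image.2 hle⟩
  · refine hmax ?_
    rw [← hzero]
    exact IsGreatest.csSup_eq ⟨mem_image_of_mem _ hq, forall_mem_image.2 hge⟩

/-- The zeros of `f` on the open interval `(a, b)` are crossings rather than touchings, and `a`
is not a zero. For continuous `f` this is a topological substitute for transversality. -/
def HasTransverseZeros (f : ℝ → ℝ) (a b : ℝ) : Prop :=
  f a ≠ 0 ∧ ∀ t ∈ Ioo a b, f t = 0 → ¬ IsLocalExtr f t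

lemma exists_rat_mem_Icc_subset {t : ℝ} {U : Set ℝ} (hU : U ∈ 𝓝 t) :
    ∃ r s : ℚ, t ∈ Icc (r : ℝ) s ∧ Icc (r : ℝ) s ⊆ U := by
  obtain ⟨l, u, ht, hlu⟩ := mem_nhds_iff_exists_Ioo_subset.1 hU
  obtain ⟨r, hlr, hrt⟩ := exists_rat_btwn ht.1
  obtain ⟨s, hts, hsu⟩ := exists_rat_btwn ht.2
  exact ⟨r, s, ⟨hrt.le, hts.le⟩, (Icc_subset_Ioo hlr hsu).trans hlu⟩

lemma ae_hasTransverseZeros_capGap {ρ : ℝ} (hρ : 0 ≤ cos ρ) (hρ' : cos ρ < 1) {a b : ℝ}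
    (hab : a ≤ b) {γ : ℝ → E} (hγ : ContinuousOn γ (Icc a b)) (hunit : ∀ t ∈ Icc a b, ‖γ t‖ = 1) :
    ∀ᵐ w ∂μ, HasTransverseZeros (fun t => capGap ρ (γ t) w) a b := by
  have hself (t : ℝ) (ht : t ∈ Icc a b) : 0 < capGap ρ (γ t) (γ t) := by
    rw [capGap, real_inner_self_eq_norm_sq, hunit t ht]
    linarith
  have hstart : ∀ᵐ w ∂μ, capGap ρ (γ a) w ≠ 0 := by
    filter_upwards [ae_not_isExtrOn_capGap μ hρ (isCompact_singleton (x := γ a))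
      (forall_eq.2 (hself a (left_mem_Icc.2 hab)))] with w hw hzero
    exact hw (γ a) rfl hzero (Or.inl fun q hq => (congrArg (capGap ρ · w) hq).ge)
  have hrat : ∀ᵐ w ∂μ, ∀ r s : ℚ, Icc (r : ℝ) s ⊆ Icc a b →
      (∃ v, ∀ q ∈ γ '' Icc (r : ℝ) s, 0 < capGap ρ q v) → ∀ q ∈ γ '' Icc (r : ℝ) s,
        capGap ρ q w = 0 → ¬ IsExtrOn (capGap ρ · w) (γ '' Icc (r : ℝ) s) q := by
    simp only [ae_all_iff]
    rintro r s hrs ⟨v, hv⟩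
    simpa only [ae_all_iff] using
      ae_not_isExtrOn_capGap μ hρ (isCompact_Icc.image_of_continuousOn (hγ.mono hrs)) hv
  filter_upwards [hstart, hrat] with w hstart hrat
  refine ⟨hstart, fun t ht hzero hextr => ?_⟩
  obtain ⟨U, hU, hextrU⟩ : ∃ U ∈ 𝓝 t, IsExtrOn (fun x => capGap ρ (γ x) w) U t :=
    hextr.elim (fun h => ⟨_, h, Or.inl fun _ hx => hx⟩) fun h => ⟨_, h, Or.inr fun _ hx => hx⟩
  have hIcc : Icc a b ∈ 𝓝 t := Icc_mem_nhds ht.1 ht.2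
  have hnear : ∀ᶠ x in 𝓝 t, 0 < capGap ρ (γ x) (γ t) :=
    ((continuousOn_capGap_comp ρ hγ (γ t)).continuousAt hIcc).eventually_const_lt
      (hself t (Ioo_subset_Icc_self ht))
  obtain ⟨r, s, htrs, hrs⟩ :=
    exists_rat_mem_Icc_subset (inter_mem hU (inter_mem hIcc hnear))
  refine hrat r s (fun x hx => (hrs hx).2.1)
    ⟨γ t, forall_mem_image.2 fun x hx => (hrs hx).2.2⟩ (γ t) (mem_image_of_mem γ htrs) hzero ?_
  have hextr_rs := hextrU.on_subset fun x hx => (hrs hx).1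
  exact hextr_rs.imp (fun h => forall_mem_image.2 h) fun h => forall_mem_image.2 h

end Transversality

lemma HasTransverseZeros.neg {f : ℝ → ℝ} {a b : ℝ} (h : HasTransverseZeros f a b) :
    HasTransverseZeros (fun t => -f t) a b :=
  ⟨neg_ne_zero.2 h.1, fun t ht hzero hextr => h.2 t ht (neg_eq_zero.1 hzero) <| by
    simpa only [neg_neg] using hextr.neg⟩

lemma HasTransverseZeros.frequently_pos {f : ℝ → ℝ} {a b t : ℝ} (h : HasTransverseZeros f a b)
    (ht : t ∈ Ioo a b) (hzero : f t = 0) : ∃ᶠ x in 𝓝 t, 0 < f x := fun hle =>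
  h.2 t ht hzero <| Or.inr <| hle.mono fun _ hx => hzero ▸ not_lt.1 hx

lemma HasTransverseZeros.frequently_neg {f : ℝ → ℝ} {a b t : ℝ} (h : HasTransverseZeros f a b)
    (ht : t ∈ Ioo a b) (hzero : f t = 0) : ∃ᶠ x in 𝓝 t, f x < 0 := by
  simpa only [neg_pos] using h.neg.frequently_pos ht (neg_eq_zero.2 hzero)

lemma HasTransverseZeros.nontrivial_zeros_of_neg {f : ℝ → ℝ} {a b : ℝ}
    (h : HasTransverseZeros f a b) (hf : ContinuousOn f (Icc a b)) (hclosed : f a = f b)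
    (ha : f a < 0) (hnonneg : ∃ t ∈ Icc a b, 0 ≤ f t) : {t ∈ Ico a b | f t = 0}.Nontrivial := by
  have hinterior : ∀ t ∈ Icc a b, 0 ≤ f t → t ∈ Ioo a b := fun t ht hft =>
    ⟨ht.1.lt_of_ne (by rintro rfl; exact ha.not_ge hft),
      ht.2.lt_of_ne (by rintro rfl; exact (hclosed ▸ ha).not_ge hft)⟩
  obtain ⟨t, ht, hpos⟩ : ∃ t ∈ Ioo a b, 0 < f t := by
    obtain ⟨t, ht, hft⟩ := hnonneg
    have hta := hinterior t ht hft
    rcases hft.eq_or_lt with hzero | hpos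
    · obtain ⟨x, hpos, hx⟩ := ((h.frequently_pos hta hzero.symm).and_eventually
        (Ioo_mem_nhds hta.1 hta.2)).exists
      exact ⟨x, hx, hpos⟩
    · exact ⟨t, hta, hpos⟩
  obtain ⟨x, hx, hfx⟩ :=
    intermediate_value_Ioo ht.1.le (hf.mono (Icc_subset_Icc_right ht.2.le)) ⟨ha, hpos⟩
  obtain ⟨y, hy, hfy⟩ :=
    intermediate_value_Ioo' ht.2.le (hf.mono (Icc_subset_Icc_left ht.1.le)) ⟨hclosed ▸ ha, hpos⟩
  exact ⟨x, ⟨⟨hx.1.le, hx.2.trans ht.2⟩, hfx⟩, y, ⟨⟨(ht.1.trans hy.1).le, hy.2⟩, hfy⟩,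
    (hx.2.trans hy.1).ne⟩

lemma HasTransverseZeros.nontrivial_zeros {f : ℝ → ℝ} {a b : ℝ} (h : HasTransverseZeros f a b)
    (hf : ContinuousOn f (Icc a b)) (hclosed : f a = f b) (hnonneg : ∃ t ∈ Icc a b, 0 ≤ f t)
    (hnonpos : ∃ t ∈ Icc a b, f t ≤ 0) : {t ∈ Ico a b | f t = 0}.Nontrivial := by
  rcases h.1.lt_or_gt with ha | ha
  · exact h.nontrivial_zeros_of_neg hf hclosed ha hnonneg
  · simpa only [neg_eq_zero] using h.neg.nontrivial_zeros_of_neg hf.neg (congrArg (-·) hclosed)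
      (neg_neg_of_pos ha) (by simpa only [neg_nonneg] using hnonpos)

/-! ### Sign changes along partitions -/

/-- The `i`-th point of the partition of `[a, b]` with mesh `1 / (n + 1)`; the sequence is
eventually constant equal to `b`. -/
def partitionPoint {a b : ℝ} (hab : a ≤ b) (n i : ℕ) : ℝ :=
  Set.Icc.addNSMul hab (1 / ((n : ℝ) + 1)) i

section Partition

variable {a b : ℝ} (hab : a ≤ b)

lemma partitionPoint_mem_Icc (n i : ℕ) : partitionPoint hab n i ∈ Icc a b :=
  Subtype.coe_prop _

lemma monotone_partitionPoint (n : ℕ) : Monotone (partitionPoint hab n) :=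
  (Subtype.mono_coe _).comp (Set.Icc.monotone_addNSMul hab (by positivity))

lemma dist_partitionPoint_succ_le (n i : ℕ) :
    dist (partitionPoint hab n (i + 1)) (partitionPoint hab n i) ≤ 1 / ((n : ℝ) + 1) := by
  have hδ : 0 ≤ 1 / ((n : ℝ) + 1) := by positivity
  exact Set.Icc.abs_sub_addNSMul_le hab hδ i
    (right_mem_Icc.2 (Set.Icc.monotone_addNSMul hab hδ i.le_succ))

lemma exists_dist_partitionPoint_le {x : ℝ} (hx : x ∈ Icc a b) (n : ℕ) :
    ∃ i, dist (partitionPoint hab n i) x ≤ 1 / ((n : ℝ) + 1) := by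
  have hn : 0 < (n : ℝ) + 1 := by positivity
  set i := ⌊(x - a) * (n + 1)⌋₊
  have hle : i ≤ (x - a) * (n + 1) :=
    Nat.floor_le (mul_nonneg (sub_nonneg.2 hx.1) hn.le)
  have hlt : (x - a) * (n + 1) < i + 1 := Nat.lt_floor_add_one _
  refine ⟨i, ?_⟩
  calc dist (partitionPoint hab n i) x
      = |(projIcc a b hab (a + i • (1 / ((n : ℝ) + 1))) : ℝ) - projIcc a b hab x| := by
        rw [projIcc_of_mem hab hx]; rfl
    _ ≤ |a + i • (1 / ((n : ℝ) + 1)) - x| := abs_projIcc_sub_projIcc hab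
    _ ≤ 1 / ((n : ℝ) + 1) := by
        rw [nsmul_eq_mul, abs_le]
        constructor <;> field_simp <;> linarith

lemma eventually_exists_partitionPoint_mem {x : ℝ} (hx : x ∈ Icc a b) {U : Set ℝ}
    (hU : U ∈ 𝓝 x) : ∀ᶠ n in atTop, ∃ i, partitionPoint hab n i ∈ U := by
  obtain ⟨ε, hε, hεU⟩ := Metric.mem_nhds_iff.1 hU
  filter_upwards [tendsto_one_div_add_atTop_nhds_zero_nat.eventually_lt_const hε] with n hn
  obtain ⟨i, hi⟩ := exists_dist_partitionPoint_le hab hx n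
  exact ⟨i, hεU (hi.trans_lt hn)⟩

end Partition

lemma exists_mem_uIcc_xor_succ {P : ℕ → Prop} {i j : ℕ} (hi : P i) (hj : ¬ P j) :
    ∃ k ∈ uIcc i j, Xor (P k) (P (k + 1)) := by
  by_contra! hconst
  simp only [xor_iff_not_iff, not_not] at hconst
  have hiff : ∀ k ∈ Icc (min i j) (max i j), (P (min i j) ↔ P k) := by
    rintro k ⟨hle, hk⟩
    induction k, hle using Nat.le_induction with
    | base => rfl
    | succ m hm ih => exact (ih (by lia)).trans (hconst m ⟨hm, by lia⟩)
  have hPi := hiff i ⟨min_le_left _ _, le_max_left _ _⟩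
  exact hj ((hiff j ⟨min_le_right _ _, le_max_right _ _⟩).1 (hPi.2 hi))

/-- The number of sign changes of `f` along the sequence `p`, zero counting as negative. -/
def signChanges (f : ℝ → ℝ) (p : ℕ → ℝ) : ℕ∞ :=
  {i | Xor (0 < f (p i)) (0 < f (p (i + 1)))}.encard

lemma HasTransverseZeros.eventually_exists_signChange_mem {f : ℝ → ℝ} {a b t : ℝ}
    (h : HasTransverseZeros f a b) (hab : a ≤ b) (hf : ContinuousOn f (Icc a b)) (ht : t ∈ Ioo a b)
    (hzero : f t = 0) {U : Set ℝ} (hU : U ∈ 𝓝 t) :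
    ∀ᶠ n in atTop, ∃ k, partitionPoint hab n k ∈ U ∧
      Xor (0 < f (partitionPoint hab n k)) (0 < f (partitionPoint hab n (k + 1))) := by
  obtain ⟨l, u, htlu, hlu⟩ := mem_nhds_iff_exists_Ioo_subset.1
    (inter_mem hU (Ioo_mem_nhds ht.1 ht.2))
  have hcont : ∀ x ∈ Ioo l u, ContinuousAt f x := fun x hx =>
    hf.continuousAt (Icc_mem_nhds (hlu hx).2.1 (hlu hx).2.2)
  have hIcc : ∀ x ∈ Ioo l u, x ∈ Icc a b := fun x hx => Ioo_subset_Icc_self (hlu hx).2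
  obtain ⟨x, hfx, hx⟩ :=
    ((h.frequently_pos ht hzero).and_eventually (Ioo_mem_nhds htlu.1 htlu.2)).exists
  obtain ⟨y, hfy, hy⟩ :=
    ((h.frequently_neg ht hzero).and_eventually (Ioo_mem_nhds htlu.1 htlu.2)).exists
  filter_upwards [eventually_exists_partitionPoint_mem hab (hIcc x hx)
      (inter_mem (Ioo_mem_nhds hx.1 hx.2) ((hcont x hx).eventually_const_lt hfx)),
    eventually_exists_partitionPoint_mem hab (hIcc y hy)
      (inter_mem (Ioo_mem_nhds hy.1 hy.2) ((hcont y hy).eventually_lt_const hfy))]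
    with n ⟨i, hi, hfi⟩ ⟨j, hj, hfj⟩
  obtain ⟨k, hk, hchange⟩ := exists_mem_uIcc_xor_succ
    (P := fun i => 0 < f (partitionPoint hab n i)) hfi hfj.not_gt
  exact ⟨k, (hlu (ordConnected_Ioo.uIcc_subset hi hj
    ((monotone_partitionPoint hab n).mapsTo_uIcc hk))).1, hchange⟩

lemma HasTransverseZeros.eventually_encard_le_signChanges {f : ℝ → ℝ} {a b : ℝ}
    (h : HasTransverseZeros f a b) (hab : a ≤ b) (hf : ContinuousOn f (Icc a b)) {F : Set ℝ}
    (hF : F.Finite) (hzeros : F ⊆ {t ∈ Ico a b | f t = 0}) :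
    ∀ᶠ n in atTop, F.encard ≤ signChanges f (partitionPoint hab n) := by
  obtain ⟨U, hU, hdisj⟩ := hF.t2_separation
  have hinterior : ∀ t ∈ F, t ∈ Ioo a b := fun t ht =>
    ⟨(hzeros ht).1.1.lt_of_ne (by rintro rfl; exact h.1 (hzeros ht).2), (hzeros ht).1.2⟩
  have hnear : ∀ᶠ n in atTop, ∀ t ∈ F, ∃ k, partitionPoint hab n k ∈ U t ∧
      Xor (0 < f (partitionPoint hab n k)) (0 < f (partitionPoint hab n (k + 1))) :=
    (eventually_all_finite hF).2 fun t ht => h.eventually_exists_signChange_mem hab hf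
      (hinterior t ht) (hzeros ht).2 ((hU t).2.mem_nhds (hU t).1)
  filter_upwards [hnear] with n hn
  choose! k hkU hchange using hn
  refine encard_le_encard_of_injOn hchange fun t ht s hs hts => ?_
  by_contra hne
  exact disjoint_left.1 (hdisj ht hs hne) (hkU t ht) (hts ▸ hkU s hs)

/-- The asymptotic number of sign changes of `f` along partitions of `[a, b]` of vanishing mesh: a
measurable substitute for the number of zeros of `f`. -/
def limSignChanges {a b : ℝ} (hab : a ≤ b) (f : ℝ → ℝ) : ℝ≥0∞ :=
  liminf (fun n => (signChanges f (partitionPoint hab n) : ℝ≥0∞)) atTop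

lemma HasTransverseZeros.encard_zeros_le_limSignChanges {f : ℝ → ℝ} {a b : ℝ}
    (h : HasTransverseZeros f a b) (hab : a ≤ b) (hf : ContinuousOn f (Icc a b)) :
    ({t ∈ Ico a b | f t = 0}.encard : ℝ≥0∞) ≤ limSignChanges hab f := by
  have hfinite : ∀ F : Set ℝ, F ⊆ {t ∈ Ico a b | f t = 0} → F.Finite →
      (F.encard : ℝ≥0∞) ≤ limSignChanges hab f := fun F hF hfin =>
    le_liminf_of_le (by isBoundedDefault) <|
      (h.eventually_encard_le_signChanges hab hf hfin hF).mono fun _ => ENat.toENNReal_le.2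
  rw [← ENNReal.tsum_set_one, ENNReal.tsum_eq_iSup_sum]
  refine iSup_le fun F => ?_
  have hcard := hfinite (Subtype.val '' (F : Set {t ∈ Ico a b | f t = 0}))
    (Subtype.coe_image_subset _ _) (F.finite_toSet.image _)
  rw [Subtype.val_injective.injOn.encard_image, encard_coe_eq_coe_finsetCard] at hcard
  simpa only [Finset.sum_const, nsmul_one, ENat.toENNReal_coe] using hcard

lemma signChanges_capGap_eq_tsum (ρ : ℝ) (γ : ℝ → E) (p : ℕ → ℝ) (w : E) :
    (signChanges (fun t => capGap ρ (γ t) w) p : ℝ≥0∞) =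
      ∑' i, (capCone ρ (γ (p i)) ∆ capCone ρ (γ (p (i + 1)))).indicator 1 w := by
  rw [signChanges, ← ENNReal.tsum_set_one]
  exact tsum_subtype _ (1 : ℕ → ℝ≥0∞)

lemma measurable_signChanges_capGap [MeasurableSpace E] [OpensMeasurableSpace E] (ρ : ℝ)
    (γ : ℝ → E) (p : ℕ → ℝ) :
    Measurable fun w => (signChanges (fun t => capGap ρ (γ t) w) p : ℝ≥0∞) := by
  simp only [signChanges_capGap_eq_tsum]
  exact Measurable.tsum fun i =>
    measurable_one.indicator (measurableSet_capCone_symmDiff ρ _ _)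

lemma measurable_limSignChanges_capGap [MeasurableSpace E] [OpensMeasurableSpace E] (ρ : ℝ)
    (γ : ℝ → E) {a b : ℝ} (hab : a ≤ b) :
    Measurable fun w => limSignChanges hab (fun t => capGap ρ (γ t) w) :=
  Measurable.liminf fun _ => measurable_signChanges_capGap ρ γ _

lemma lintegral_signChanges_capGap [MeasurableSpace E] [OpensMeasurableSpace E]
    (μ : Measure E) (ρ : ℝ) (γ : ℝ → E) (p : ℕ → ℝ) (A : Set E) :
    ∫⁻ w in A, signChanges (fun t => capGap ρ (γ t) w) p ∂μ =
      ∑' i, μ (A ∩ capCone ρ (γ (p i)) ∆ capCone ρ (γ (p (i + 1)))) := by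
  have hmeas (i : ℕ) := measurableSet_capCone_symmDiff ρ (γ (p i)) (γ (p (i + 1)))
  simp only [signChanges_capGap_eq_tsum]
  rw [lintegral_tsum fun i => (measurable_one.indicator (hmeas i)).aemeasurable]
  refine tsum_congr fun i => ?_
  rw [lintegral_indicator_one (hmeas i), Measure.restrict_apply (hmeas i), inter_comm]

lemma tsum_edist_le_eVariationOn {α X : Type*} [LinearOrder α] [PseudoEMetricSpace X] {γ : α → X}
    {s : Set α} {p : ℕ → α} (hp : Monotone p) (hps : ∀ i, p i ∈ s) :
    ∑' i, edist (γ (p i)) (γ (p (i + 1))) ≤ eVariationOn γ s := by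
  refine ENNReal.tsum_le_of_sum_range_le fun n => ?_
  simpa only [edist_comm] using eVariationOn.sum_le (f := γ) (n := n) hp hps

/-! ### Crofton's inequality -/

section Crofton

variable {ρ : ℝ} (hρ : ρ ∈ Ioc 0 (π / 2)) {γ : ℝ → E3}
include hρ

lemma ofReal_mul_lintegral_signChanges_le {s : Set ℝ} (hunit : ∀ t ∈ s, ‖γ t‖ = 1) {p : ℕ → ℝ}
    (hp : Monotone p) (hps : ∀ i, p i ∈ s) {ε : ℝ}
    (hε : ∀ i, dist (γ (p i)) (γ (p (i + 1))) ≤ ε) :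
    ENNReal.ofReal (1 - ε ^ 2) *
        ∫⁻ w in ball 0 1, signChanges (fun t => capGap ρ (γ t) w) p ≤
      ENNReal.ofReal (4 / 3 * sin ρ) * eVariationOn γ s := by
  rw [lintegral_signChanges_capGap, ← ENNReal.tsum_mul_left]
  calc ∑' i, ENNReal.ofReal (1 - ε ^ 2) *
        volume (ball 0 1 ∩ capCone ρ (γ (p i)) ∆ capCone ρ (γ (p (i + 1))))
      ≤ ∑' i, ENNReal.ofReal (4 / 3 * sin ρ) * edist (γ (p i)) (γ (p (i + 1))) := by
        refine ENNReal.tsum_le_tsum fun i => le_trans ?_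
          (ofReal_one_sub_sq_mul_volume_capCone_symmDiff_le hρ (hunit _ (hps i))
            (hunit _ (hps (i + 1))))
        gcongr
        exact hε i
    _ ≤ ENNReal.ofReal (4 / 3 * sin ρ) * eVariationOn γ s := by
        rw [ENNReal.tsum_mul_left]
        gcongr
        exact tsum_edist_le_eVariationOn hp hps

/-- Half of Crofton's formula, `4 / 3` being `1 / 3` of the classical constant `4` because the
integral is over the ball instead of the sphere. -/
lemma lintegral_limSignChanges_le {a b : ℝ} (hab : a ≤ b) (hγ : ContinuousOn γ (Icc a b))
    (hunit : ∀ t ∈ Icc a b, ‖γ t‖ = 1) :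
    ∫⁻ w in ball 0 1, limSignChanges hab (fun t => capGap ρ (γ t) w) ≤
      ENNReal.ofReal (4 / 3 * sin ρ) * eVariationOn γ (Icc a b) := by
  refine ENNReal.le_of_forall_lt_one_mul_le fun c hc => ?_
  have hlim : Tendsto (fun ε : ℝ => ENNReal.ofReal (1 - ε ^ 2)) (𝓝[>] 0) (𝓝 1) := by
    have hcont : Continuous fun ε : ℝ => ENNReal.ofReal (1 - ε ^ 2) :=
      ENNReal.continuous_ofReal.comp (by fun_prop)
    simpa using (hcont.tendsto 0).mono_left nhdsWithin_le_nhds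
  obtain ⟨ε, hcε, hε⟩ := ((hlim.eventually_const_lt hc).and self_mem_nhdsWithin).exists
  obtain ⟨δ, hδ, hγδ⟩ := Metric.uniformContinuousOn_iff.1
    (isCompact_Icc.uniformContinuousOn_of_continuous hγ) ε hε
  have hmesh := tendsto_one_div_add_atTop_nhds_zero_nat.eventually_lt_const hδ
  have hbound : ∀ᶠ n : ℕ in atTop, c * ∫⁻ w in ball 0 1,
      signChanges (fun t => capGap ρ (γ t) w) (partitionPoint hab n) ≤
        ENNReal.ofReal (4 / 3 * sin ρ) * eVariationOn γ (Icc a b) := by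
    filter_upwards [hmesh] with n hn
    refine (mul_le_mul_left hcε.le _).trans (ofReal_mul_lintegral_signChanges_le hρ hunit
      (monotone_partitionPoint hab n) (partitionPoint_mem_Icc hab n) fun i => (hγδ _
        (partitionPoint_mem_Icc hab n _) _ (partitionPoint_mem_Icc hab n _) ?_).le)
    rw [dist_comm]
    exact (dist_partitionPoint_succ_le hab n i).trans_lt hn
  calc c * ∫⁻ w in ball 0 1, limSignChanges hab (fun t => capGap ρ (γ t) w)
      ≤ c * liminf (fun n => ∫⁻ w in ball 0 1,
          signChanges (fun t => capGap ρ (γ t) w) (partitionPoint hab n)) atTop := by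
        gcongr
        exact lintegral_liminf_le fun n => measurable_signChanges_capGap ρ γ _
    _ = liminf (fun n => c * ∫⁻ w in ball 0 1,
          signChanges (fun t => capGap ρ (γ t) w) (partitionPoint hab n)) atTop :=
        (ENNReal.liminf_const_mul_of_ne_top hc.ne_top).symm
    _ ≤ ENNReal.ofReal (4 / 3 * sin ρ) * eVariationOn γ (Icc a b) :=
        liminf_le_of_frequently_le' hbound.frequently

end Crofton

/-! ### Exactly two intersections -/

lemma exists_capGap_nonneg {ρ : ℝ} (hρ : ρ ≤ π) {γ : ℝ → E} {s : Set ℝ}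
    (hunit : ∀ t ∈ s, ‖γ t‖ = 1) (hcover : ∀ p : E, ‖p‖ = 1 → ∃ t ∈ s, arccos ⟪p, γ t⟫ ≤ ρ)
    {w : E} (hw : w ≠ 0) : ∃ t ∈ s, 0 ≤ capGap ρ (γ t) w := by
  have hdir : ‖‖w‖⁻¹ • w‖ = 1 := norm_smul_inv_norm hw
  obtain ⟨t, ht, hle⟩ := hcover _ hdir
  have hgap := capGap_nonneg_of_arccos_inner_le hρ (hunit t ht) hdir hle
  rw [capGap_smul _ _ _ (by positivity)] at hgap
  exact ⟨t, ht, nonneg_of_mul_nonneg_right hgap (by positivity)⟩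

lemma nontrivial_zeros_capGap {ρ : ℝ} (hρ : ρ ∈ Ioc 0 (π / 2)) {γ : ℝ → E} {a b : ℝ}
    (hγ : ContinuousOn γ (Icc a b)) (hunit : ∀ t ∈ Icc a b, ‖γ t‖ = 1) (hclosed : γ a = γ b)
    (hcover : ∀ p : E, ‖p‖ = 1 → ∃ t ∈ Icc a b, arccos ⟪p, γ t⟫ ≤ ρ) {w : E}
    (hw : HasTransverseZeros (fun t => capGap ρ (γ t) w) a b) :
    {t ∈ Ico a b | capGap ρ (γ t) w = 0}.Nontrivial := by
  have hne : w ≠ 0 := by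
    rintro rfl
    exact hw.1 (by simp [capGap])
  have hπ : ρ ≤ π := hρ.2.trans (by linarith [pi_pos])
  refine hw.nontrivial_zeros (continuousOn_capGap_comp ρ hγ w) (by rw [hclosed])
    (exists_capGap_nonneg hπ hunit hcover hne) ?_
  obtain ⟨t, ht, hneg⟩ := exists_capGap_nonneg hπ hunit hcover (neg_ne_zero.2 hne)
  have hadd := capGap_add_le (cos_nonneg_of_mem_Ioc hρ) (γ t) w (-w)
  rw [add_neg_cancel, show capGap ρ (γ t) 0 = 0 by simp [capGap]] at hadd
  exact ⟨t, ht, by linarith⟩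

lemma lintegral_limSignChanges_le_two_mul_volume_ball {ρ : ℝ} (hρ : ρ ∈ Ioc 0 (π / 2))
    {γ : ℝ → E3} {a b : ℝ} (hab : a ≤ b) (hγ : ContinuousOn γ (Icc a b))
    (hunit : ∀ t ∈ Icc a b, ‖γ t‖ = 1)
    (hlen : eVariationOn γ (Icc a b) ≤ ENNReal.ofReal (2 * π / sin ρ)) :
    ∫⁻ w in ball 0 1, limSignChanges hab (fun t => capGap ρ (γ t) w) ≤
      2 * volume (ball (0 : E3) 1) := by
  have hsin : 0 < sin ρ := sin_pos_of_mem_Ioc hρ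
  calc ∫⁻ w in ball 0 1, limSignChanges hab (fun t => capGap ρ (γ t) w)
      ≤ ENNReal.ofReal (4 / 3 * sin ρ) * ENNReal.ofReal (2 * π / sin ρ) :=
        (lintegral_limSignChanges_le hρ hab hγ hunit).trans (by gcongr)
    _ = ENNReal.ofReal (2 * (π * 4 / 3)) := by
        rw [← ENNReal.ofReal_mul (by positivity)]
        congr 1
        field_simp
    _ = 2 * volume (ball (0 : E3) 1) := by
        rw [EuclideanSpace.volume_ball_fin_three, ENNReal.ofReal_one, one_pow, one_mul,
          ENNReal.ofReal_mul zero_le_two, ENNReal.ofReal_ofNat]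

lemma ae_ball_encard_zeros_capGap_eq_two {ρ : ℝ} (hρ : ρ ∈ Ioc 0 (π / 2)) {γ : ℝ → E3} {a b : ℝ}
    (hab : a ≤ b) (hγ : ContinuousOn γ (Icc a b)) (hunit : ∀ t ∈ Icc a b, ‖γ t‖ = 1)
    (hclosed : γ a = γ b) (hlen : eVariationOn γ (Icc a b) ≤ ENNReal.ofReal (2 * π / sin ρ))
    (hcover : ∀ p : E3, ‖p‖ = 1 → ∃ t ∈ Icc a b, arccos ⟪p, γ t⟫ ≤ ρ) :
    ∀ᵐ w ∂volume.restrict (ball (0 : E3) 1),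
      {t ∈ Ico a b | capGap ρ (γ t) w = 0}.encard = 2 := by
  have hcos_lt : cos ρ < 1 := by
    simpa only [cos_zero] using cos_lt_cos_of_nonneg_of_le_pi_div_two le_rfl hρ.2 hρ.1
  have htrans : ∀ᵐ w ∂volume.restrict (ball (0 : E3) 1),
      HasTransverseZeros (fun t => capGap ρ (γ t) w) a b :=
    ae_restrict_of_ae (ae_hasTransverseZeros_capGap volume (cos_nonneg_of_mem_Ioc hρ) hcos_lt
      hab hγ hunit)
  have hlower (w : E3) (hw : HasTransverseZeros (fun t => capGap ρ (γ t) w) a b) :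
      2 ≤ {t ∈ Ico a b | capGap ρ (γ t) w = 0}.encard := by
    have hlt := one_lt_encard_iff_nontrivial.2
      (nontrivial_zeros_capGap hρ hγ hunit hclosed hcover hw)
    simpa only [one_add_one_eq_two] using Order.add_one_le_of_lt hlt
  have hupper (w : E3) (hw : HasTransverseZeros (fun t => capGap ρ (γ t) w) a b) :=
    hw.encard_zeros_le_limSignChanges hab (continuousOn_capGap_comp ρ hγ w)
  have htwo_le : (fun _ => 2) ≤ᵐ[volume.restrict (ball (0 : E3) 1)]
      fun w => limSignChanges hab (fun t => capGap ρ (γ t) w) := by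
    filter_upwards [htrans] with w hw
    exact le_trans (by exact_mod_cast hlower w hw) (hupper w hw)
  have hconst : ∫⁻ _ in ball (0 : E3) 1, 2 = 2 * volume (ball (0 : E3) 1) := setLIntegral_const _ _
  have htwo_eq := ae_eq_of_ae_le_of_lintegral_le htwo_le
    (hconst ▸ ENNReal.mul_ne_top ENNReal.ofNat_ne_top measure_ball_lt_top.ne)
    (measurable_limSignChanges_capGap ρ γ hab).aemeasurable
    (hconst ▸ lintegral_limSignChanges_le_two_mul_volume_ball hρ hab hγ hunit hlen)
  filter_upwards [htrans, htwo_eq] with w hw heq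
  exact le_antisymm (by exact_mod_cast (hupper w hw).trans_eq heq.symm) (hlower w hw)

lemma ae_toSphere_of_ae_ball [FiniteDimensional ℝ E] [MeasurableSpace E] [BorelSpace E]
    (μ : Measure E) [μ.IsAddHaarMeasure] {P : E → Prop}
    (h : ∀ᵐ w ∂μ.restrict (ball 0 1), P w)
    (hP : ∀ p : sphere (0 : E) 1, ∀ r : ℝ, 0 < r → P (r • (p : E)) → P p) :
    ∀ᵐ p : sphere (0 : E) 1 ∂μ.toSphere, P p := by
  rw [ae_restrict_iff' measurableSet_ball] at h
  have hpunctured : ∀ᵐ x : ({0}ᶜ : Set E) ∂μ.comap Subtype.val, (x : E) ∈ ball 0 1 → P x := by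
    have hemb := MeasurableEmbedding.subtype_coe (measurableSet_singleton (0 : E)).compl
    refine (hemb.ae_map_iff (p := fun w : E => w ∈ ball 0 1 → P w)).1 ?_
    rw [hemb.map_comap]
    exact ae_restrict_of_ae h
  have hpolar := (MeasurePreserving.symm (homeomorphUnitSphereProd E).toMeasurableEquiv
    μ.measurePreserving_homeomorphUnitSphereProd).quasiMeasurePreserving.ae hpunctured
  filter_upwards [Measure.ae_ae_of_ae_prod hpolar] with p hp
  have hpos : Measure.volumeIoiPow (Module.finrank ℝ E - 1) (Iio ⟨1, mem_Ioi.2 one_pos⟩) ≠ 0 := by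
    rw [Measure.volumeIoiPow_apply_Iio, ENNReal.ofReal_ne_zero_iff, one_pow]
    positivity
  obtain ⟨r, hr, hPr⟩ := ((frequently_ae_mem_iff.2 hpos).and_eventually hp).exists
  refine hP p r r.2 (hPr ?_)
  change (r : ℝ) • (p : E) ∈ ball 0 1
  rw [mem_ball_zero_iff, norm_smul, norm_eq_of_mem_sphere, mul_one, norm_of_nonneg r.2.le]
  exact hr

theorem circle_meets_curve_in_two_points_general {ρ : ℝ} (hρ : ρ ∈ Ioc 0 (π / 2)) {a b : ℝ}
    (hab : a ≤ b) {γ : ℝ → E3} (hγ : ContinuousOn γ (Icc a b)) (hunit : ∀ t ∈ Icc a b, ‖γ t‖ = 1)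
    (hclosed : γ a = γ b) (hlen : eVariationOn γ (Icc a b) ≤ ENNReal.ofReal (2 * π / sin ρ))
    (hcover : ∀ p : E3, ‖p‖ = 1 → ∃ t ∈ Icc a b, arccos ⟪p, γ t⟫ ≤ ρ) :
    ∀ᵐ p : sphere (0 : E3) 1 ∂(volume : Measure E3).toSphere,
      {t ∈ Ico a b | arccos ⟪γ t, (p : E3)⟫ = ρ}.encard = 2 := by
  have hball := ae_ball_encard_zeros_capGap_eq_two hρ hab hγ hunit hclosed hlen hcover
  have hsphere := ae_toSphere_of_ae_ball volume hball fun p r hr h => by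
    simpa only [capGap_smul _ _ _ hr.le, mul_eq_zero, hr.ne', false_or] using h
  filter_upwards [hsphere] with p hp
  rw [← hp]
  congr 1
  ext t
  refine and_congr_right fun ht => ?_
  exact arccos_inner_eq_iff ⟨hρ.1.le, hρ.2.trans (by linarith [pi_pos])⟩
    (hunit t (Ico_subset_Icc_self ht)) (norm_eq_of_mem_sphere p)

lemma continuousOn_of_hasConstantSpeedOnWith {X : Type*} [PseudoEMetricSpace X] {f : ℝ → X}
    {s : Set ℝ} {C : ℝ≥0} (h : HasConstantSpeedOnWith f s C) : ContinuousOn f s := by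
  refine LipschitzOnWith.continuousOn (K := C) fun x hx y hy => ?_
  wlog hxy : x ≤ y generalizing x y
  · rw [edist_comm, edist_comm x]
    exact this y hy x hx (le_of_not_ge hxy)
  calc edist (f x) (f y) ≤ eVariationOn f (s ∩ Icc x y) :=
        eVariationOn.edist_le f ⟨hx, left_mem_Icc.2 hxy⟩ ⟨hy, right_mem_Icc.2 hxy⟩
    _ = C * edist x y := by
        rw [h hx hy, ENNReal.ofReal_mul C.coe_nonneg, ENNReal.ofReal_coe_nnreal, edist_comm,
          edist_dist, Real.dist_eq, abs_of_nonneg (sub_nonneg.2 hxy)]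

/-- For a closed constant speed curve on the unit sphere of length `4π/√2` within
spherical distance `π/4` of every point of the sphere, almost every circle of spherical
radius `π/4` meets the curve in exactly two parameters. -/
theorem circle_meets_curve_in_two_points
    (a b : ℝ) (hab : a < b) (γ : ℝ → E3) (C : ℝ≥0)
    (hsphere : ∀ t ∈ Set.Icc a b, ‖γ t‖ = 1)
    (hclosed : γ a = γ b)
    (hspeed : HasConstantSpeedOnWith γ (Set.Icc a b) C)
    (hlen : eVariationOn γ (Set.Icc a b) = ENNReal.ofReal (4 * π / Real.sqrt 2))
    (hcover : ∀ p : E3, ‖p‖ = 1 → ∃ t ∈ Set.Icc a b, Real.arccos ⟪p, γ t⟫ ≤ π / 4) :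
    ∀ᵐ p : Metric.sphere (0 : E3) 1 ∂((volume : Measure E3).toSphere),
      ({t ∈ Set.Ico a b | Real.arccos ⟪γ t, (p : E3)⟫ = π / 4}).encard = 2 := by
  have hlength : 4 * π / √2 = 2 * π / sin (π / 4) := by
    rw [sin_pi_div_four]
    field_simp
    norm_num
  exact circle_meets_curve_in_two_points_general ⟨by positivity, by linarith [pi_pos]⟩ hab.le
    (continuousOn_of_hasConstantSpeedOnWith hspeed) hsphere hclosed
    (hlength ▸ hlen.le) hcover
end
end

section
/- Let γ : [a,b] → S² ⊂ ℝ³ be a closed constant-speed curve of length L(γ) = 4π/√2 such that every point of S² has spherical distance at most π/4 from the image of γ. Then for every p ∈ S², the portion of γ lying strictly outside the circle C_{π/4}(p) has length at least π; that is, ∫_{{t ∈ [a,b] : d(γ(t),p) > π/4}} |γ′(t)| dt ≥ π. -/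
/-!
Let `θ t` be the spherical distance from `γ t` to `p`. Covering `p` and `-p` makes `θ` reach a value
at most `π / 4` and a value at least `3 * π / 4`, so the truncation `max θ (π / 4)` of `θ` varies by
at least `π / 2` between two points of the closed curve, hence has total variation at least `π`. It
is locally minimal, hence has zero derivative, where `θ ≤ π / 4`, and elsewhere its derivative is
bounded by the speed of `γ`, since the distance to `p` is `1`-Lipschitz on the sphere.
-/

open MeasureTheory Set Real
open scoped ENNReal NNReal RealInnerProductSpace

noncomputable section

open InnerProductGeometry
open scoped Topology

section RealFunction

variable {a b r s t : ℝ} {u v w : ℝ → ℝ}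

lemma abs_deriv_max_const_le (hu : ContinuousAt u t) :
    |deriv (fun s => max (u s) r) t| ≤ {s | r < u s}.indicator (fun s => |deriv u s|) t := by
  rcases lt_or_ge r (u t) with hlt | hge
  · have heq : (fun s => max (u s) r) =ᶠ[𝓝 t] u := by
      filter_upwards [hu.eventually_const_lt hlt] with s hs using max_eq_left hs.le
    rw [heq.deriv_eq, indicator_of_mem (show t ∈ {s | r < u s} from hlt)]
  · have hmin : IsLocalMin (fun s => max (u s) r) t :=
      Filter.Eventually.of_forall fun s => by simp only [max_eq_right hge, le_max_right]
    rw [hmin.deriv_eq_zero, abs_zero]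
    exact indicator_nonneg (fun _ _ => abs_nonneg _) t

lemma abs_sub_le_integral_of_abs_deriv_le (hab : a ≤ b) (hv : AbsolutelyContinuousOnInterval v a b)
    (hw : IntervalIntegrable w volume a b) (hvw : ∀ᵐ x, x ∈ Ioc a b → |deriv v x| ≤ w x) :
    |v b - v a| ≤ ∫ x in a..b, w x := by
  rw [← hv.integral_deriv_eq_sub, ← Real.norm_eq_abs]
  exact intervalIntegral.norm_integral_le_of_norm_le hab hvw hw

lemma two_mul_abs_sub_le_integral_of_eq (hv : AbsolutelyContinuousOnInterval v a b)
    (hw : IntervalIntegrable w volume a b) (hvw : ∀ᵐ x, x ∈ Ioc a b → |deriv v x| ≤ w x)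
    (hclosed : v a = v b) (hs : s ∈ Icc a b) (ht : t ∈ Icc a b) :
    2 * |v t - v s| ≤ ∫ x in a..b, w x := by
  wlog hst : s ≤ t generalizing s t
  · rw [abs_sub_comm]
    exact this ht hs (le_of_not_ge hst)
  have hsub {c d : ℝ} (hc : a ≤ c) (hcd : c ≤ d) (hd : d ≤ b) : uIcc c d ⊆ uIcc a b := by
    simpa only [uIcc_of_le, hcd, hc.trans (hcd.trans hd)] using Icc_subset_Icc hc hd
  have hint {c d : ℝ} (hc : a ≤ c) (hcd : c ≤ d) (hd : d ≤ b) :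
      IntervalIntegrable w volume c d :=
    hw.mono_set (hsub hc hcd hd)
  have hbound {c d : ℝ} (hc : a ≤ c) (hcd : c ≤ d) (hd : d ≤ b) :
      |v d - v c| ≤ ∫ x in c..d, w x := by
    refine abs_sub_le_integral_of_abs_deriv_le hcd (hv.mono (hsub hc hcd hd)) (hint hc hcd hd) ?_
    filter_upwards [hvw] with x hx hxcd using hx (Ioc_subset_Ioc hc hd hxcd)
  have houter : |v t - v s| ≤ |v s - v a| + |v b - v t| := by
    rw [hclosed, abs_sub_comm (v t)]
    exact abs_sub_le (v s) (v b) (v t)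
  calc 2 * |v t - v s|
      ≤ |v s - v a| + |v t - v s| + |v b - v t| := by linarith
    _ ≤ (∫ x in a..s, w x) + (∫ x in s..t, w x) + ∫ x in t..b, w x := by
        gcongr
        exacts [hbound le_rfl hs.1 hs.2, hbound hs.1 hst ht.2, hbound ht.1 ht.2 le_rfl]
    _ = ∫ x in a..b, w x := by
        rw [intervalIntegral.integral_add_adjacent_intervals (hint le_rfl hs.1 hs.2)
            (hint hs.1 hst ht.2),
          intervalIntegral.integral_add_adjacent_intervals (hint le_rfl ht.1 ht.2)
            (hint ht.1 ht.2 le_rfl)]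

end RealFunction

lemma measurableSet_sep_lt {X : Type*} [TopologicalSpace X] [MeasurableSpace X]
    [OpensMeasurableSpace X] {u : X → ℝ} {S : Set X} (hu : ContinuousOn u S)
    (hS : MeasurableSet S) (r : ℝ) : MeasurableSet {x ∈ S | r < u x} := by
  obtain ⟨U, hU, hUeq⟩ := continuousOn_iff'.1 hu (Ioi r) isOpen_Ioi
  have hset : {x ∈ S | r < u x} = U ∩ S := by
    rw [← hUeq, inter_comm]
    rfl
  rw [hset]
  exact hU.measurableSet.inter hS

lemma lipschitzOnWith_of_hasConstantSpeedOnWith {X : Type*} [PseudoEMetricSpace X] {f : ℝ → X}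
    {S : Set ℝ} {C : ℝ≥0} (hf : HasConstantSpeedOnWith f S C) : LipschitzOnWith C f S := by
  intro x hx y hy
  wlog hxy : x ≤ y generalizing x y
  · rw [edist_comm, edist_comm x]
    exact this hy hx (le_of_not_ge hxy)
  calc edist (f x) (f y)
      ≤ eVariationOn f (S ∩ Icc x y) := eVariationOn.edist_le f ⟨hx, le_rfl, hxy⟩ ⟨hy, hxy, le_rfl⟩
    _ = C * edist x y := by
        rw [hf hx hy, ENNReal.ofReal_mul C.coe_nonneg, ENNReal.ofReal_coe_nnreal, edist_comm,
          edist_dist, Real.dist_eq, abs_of_nonneg (sub_nonneg.2 hxy)]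

section Curve

variable {F : Type*} [NormedAddCommGroup F] [NormedSpace ℝ F]
  {a b : ℝ} {f : ℝ → F} {C : ℝ≥0}

lemma derivWithin_Icc_ae_eq_deriv (f : ℝ → F) (a b : ℝ) :
    derivWithin f (Icc a b) =ᵐ[volume.restrict (Icc a b)] deriv f := by
  rw [← restrict_Ioo_eq_restrict_Icc]
  filter_upwards [ae_restrict_mem measurableSet_Ioo] with x hx
  exact derivWithin_of_mem_nhds (Icc_mem_nhds hx.1 hx.2)

lemma integrableOn_norm_derivWithin_Icc [CompleteSpace F] (hf : LipschitzOnWith C f (Icc a b)) :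
    IntegrableOn (fun t => ‖derivWithin f (Icc a b) t‖) (Icc a b) := by
  refine Integrable.congr ?_ ((derivWithin_Icc_ae_eq_deriv f a b).symm.fun_comp norm)
  rw [← restrict_Ioo_eq_restrict_Icc]
  refine Measure.integrableOn_of_bounded (M := C) measure_Ioo_lt_top.ne
    (stronglyMeasurable_deriv f).norm.aestronglyMeasurable ?_
  filter_upwards [ae_restrict_mem measurableSet_Ioo] with t ht
  simpa only [Function.comp_apply, norm_norm] using
    norm_deriv_le_of_lipschitzOn (Icc_mem_nhds ht.1 ht.2) hf

end Curve

section Angle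

variable {E : Type*} [NormedAddCommGroup E] [InnerProductSpace ℝ E]
  {x y p : E} {a b r R s t : ℝ} {γ : ℝ → E} {C : ℝ≥0}

lemma angle_eq_arccos_inner_of_norm_eq_one (hx : ‖x‖ = 1) (hy : ‖y‖ = 1) :
    angle x y = arccos ⟪x, y⟫ := by
  rw [angle, hx, hy, mul_one, div_one]

lemma abs_angle_sub_angle_le (x y p : E) : |angle x p - angle y p| ≤ angle x y := by
  have h₁ := angle_le_angle_add_angle x y p
  have h₂ := angle_le_angle_add_angle y x p
  rw [angle_comm y x] at h₂
  exact abs_sub_le_iff.2 ⟨by linarith, by linarith⟩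

lemma norm_sub_eq_two_mul_sin_half_angle_s19 (hx : ‖x‖ = 1) (hy : ‖y‖ = 1) :
    ‖x - y‖ = 2 * sin (angle x y / 2) := by
  have hsin : 0 ≤ sin (angle x y / 2) :=
    sin_nonneg_of_nonneg_of_le_pi (by linarith [angle_nonneg x y])
      (by linarith [angle_le_pi x y, pi_pos])
  refine (sq_eq_sq₀ (norm_nonneg _) (by positivity)).1 ?_
  rw [norm_sub_sq_real, hx, hy, inner_eq_cos_angle_of_norm_eq_one hx hy, mul_pow,
    sin_sq_eq_half_sub, mul_div_cancel₀ _ two_ne_zero]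
  ring

lemma norm_sub_eq_angle_mul_sinc (hx : ‖x‖ = 1) (hy : ‖y‖ = 1) :
    ‖x - y‖ = angle x y * sinc (angle x y / 2) := by
  rw [norm_sub_eq_two_mul_sin_half_angle_s19 hx hy]
  rcases eq_or_ne (angle x y) 0 with h | h
  · simp only [h, zero_div, sin_zero, mul_zero, zero_mul]
  · rw [sinc_of_ne_zero (by positivity)]
    field_simp

lemma angle_le_pi_div_two_mul_norm_sub (hx : ‖x‖ = 1) (hy : ‖y‖ = 1) :
    angle x y ≤ π / 2 * ‖x - y‖ := by
  have hjordan : 2 / π * (angle x y / 2) ≤ sin (angle x y / 2) :=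
    mul_le_sin (by linarith [angle_nonneg x y]) (by linarith [angle_le_pi x y])
  calc angle x y = π * (2 / π * (angle x y / 2)) := by field_simp
    _ ≤ π * sin (angle x y / 2) := by gcongr
    _ = π / 2 * ‖x - y‖ := by rw [norm_sub_eq_two_mul_sin_half_angle_s19 hx hy]; ring

lemma lipschitzOnWith_angle_const {X : Type*} [PseudoMetricSpace X] {f : X → E} {S : Set X}
    (hf : LipschitzOnWith C f S) (hsphere : ∀ x ∈ S, ‖f x‖ = 1) (p : E) :
    LipschitzOnWith (NNReal.pi / 2 * C) (fun x => angle (f x) p) S := by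
  refine LipschitzOnWith.of_dist_le_mul fun x hx y hy => ?_
  calc |angle (f x) p - angle (f y) p|
      ≤ angle (f x) (f y) := abs_angle_sub_angle_le _ _ _
    _ ≤ π / 2 * ‖f x - f y‖ := angle_le_pi_div_two_mul_norm_sub (hsphere x hx) (hsphere y hy)
    _ ≤ π / 2 * (C * dist x y) := by
        gcongr
        simpa only [dist_eq_norm] using hf.dist_le_mul x hx y hy
    _ = (NNReal.pi / 2 * C : ℝ≥0) * dist x y := by
        rw [NNReal.coe_mul, NNReal.coe_div, NNReal.coe_real_pi, NNReal.coe_ofNat, mul_assoc]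

lemma tendsto_sinc_half_angle (hx : x ≠ 0) :
    Filter.Tendsto (fun y => sinc (angle y x / 2)) (𝓝 x) (𝓝 1) := by
  have hangle : Filter.Tendsto (fun y => angle y x / 2) (𝓝 x) (𝓝 0) := by
    have hcont : ContinuousAt (fun y => angle y x) x :=
      (continuousAt_angle (x := (x, x)) hx hx).comp (f := fun y => (y, x))
        (continuousAt_id.prodMk continuousAt_const)
    simpa only [angle_self hx, zero_div] using hcont.tendsto.div_const 2
  simpa only [sinc_zero, Function.comp_def] using (continuous_sinc.tendsto 0).comp hangle

-- The chord-to-angle ratio `sinc (angle / 2)` tends to `1`, so the slopes of the angle function are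
-- asymptotically bounded by those of `γ`.
lemma abs_deriv_angle_le_norm_deriv (hγ : DifferentiableAt ℝ γ t)
    (hsphere : ∀ᶠ s in 𝓝 t, ‖γ s‖ = 1) (p : E) :
    |deriv (fun s => angle (γ s) p) t| ≤ ‖deriv γ t‖ := by
  by_cases hθ : DifferentiableAt ℝ (fun s => angle (γ s) p) t
  swap
  · rw [deriv_zero_of_not_differentiableAt hθ, abs_zero]
    exact norm_nonneg _
  have hne : γ t ≠ 0 := norm_ne_zero_iff.1 (by simp [hsphere.self_of_nhds])
  have hsinc : Filter.Tendsto (fun s => sinc (angle (γ s) (γ t) / 2)) (𝓝[≠] t) (𝓝 1) :=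
    (tendsto_sinc_half_angle hne).comp (hγ.continuousAt.mono_left nhdsWithin_le_nhds)
  have hlim := (hasDerivAt_iff_tendsto_slope.1 hθ.hasDerivAt).norm.mul hsinc
  rw [mul_one] at hlim
  refine le_of_tendsto_of_tendsto hlim (hasDerivAt_iff_tendsto_slope.1 hγ.hasDerivAt).norm ?_
  filter_upwards [nhdsWithin_le_nhds hsphere, hsinc.eventually_const_lt zero_lt_one]
    with s hs hsinc_pos
  have hslope : ‖slope (fun s => angle (γ s) p) t s‖ ≤ ‖(s - t)⁻¹‖ * angle (γ s) (γ t) := by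
    rw [slope_def_module, norm_smul]
    gcongr
    exact abs_angle_sub_angle_le _ _ _
  calc ‖slope (fun s => angle (γ s) p) t s‖ * sinc (angle (γ s) (γ t) / 2)
      ≤ ‖(s - t)⁻¹‖ * angle (γ s) (γ t) * sinc (angle (γ s) (γ t) / 2) := by gcongr
    _ = ‖slope γ t s‖ := by
        rw [slope_def_module, norm_smul, norm_sub_eq_angle_mul_sinc hs hsphere.self_of_nhds,
          mul_assoc]

lemma ae_abs_deriv_max_angle_le [FiniteDimensional ℝ E] (hγ : LipschitzOnWith C γ (Icc a b))
    (hsphere : ∀ t ∈ Icc a b, ‖γ t‖ = 1) (p : E) (r : ℝ) :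
    ∀ᵐ t, t ∈ Ioc a b → |deriv (fun s => max (angle (γ s) p) r) t| ≤
      {s ∈ Icc a b | r < angle (γ s) p}.indicator (fun s => ‖derivWithin γ (Icc a b) s‖) t := by
  filter_upwards [hγ.ae_differentiableWithinAt_of_mem_real, Measure.ae_ne volume b]
    with t hdiff htb ht
  have hnhds : Icc a b ∈ 𝓝 t := Icc_mem_nhds ht.1 (lt_of_le_of_ne ht.2 htb)
  have hγt : DifferentiableAt ℝ γ t := (hdiff (Ioc_subset_Icc_self ht)).differentiableAt hnhds
  have hsphere_near : ∀ᶠ s in 𝓝 t, ‖γ s‖ = 1 := Filter.mem_of_superset hnhds hsphere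
  have hθ : ContinuousAt (fun s => angle (γ s) p) t :=
    (lipschitzOnWith_angle_const hγ hsphere p).continuousOn.continuousAt hnhds
  refine (abs_deriv_max_const_le hθ).trans ?_
  by_cases hr : r < angle (γ t) p
  · rw [indicator_of_mem (show t ∈ {s | r < angle (γ s) p} from hr),
      indicator_of_mem (show t ∈ {s ∈ Icc a b | r < angle (γ s) p} from
        ⟨Ioc_subset_Icc_self ht, hr⟩), derivWithin_of_mem_nhds hnhds]
    exact abs_deriv_angle_le_norm_deriv hγt hsphere_near p
  · rw [indicator_of_notMem (show t ∉ {s | r < angle (γ s) p} from hr)]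
    exact indicator_nonneg (fun _ _ => norm_nonneg _) t

lemma two_mul_sub_le_length_outside [FiniteDimensional ℝ E] (hγ : LipschitzOnWith C γ (Icc a b))
    (hsphere : ∀ t ∈ Icc a b, ‖γ t‖ = 1) (hclosed : γ a = γ b) (hs : s ∈ Icc a b)
    (ht : t ∈ Icc a b) (hsr : angle (γ s) p ≤ r) (htR : R ≤ angle (γ t) p) :
    2 * (R - r) ≤
      ∫ x in {x ∈ Icc a b | r < angle (γ x) p}, ‖derivWithin γ (Icc a b) x‖ := by
  have hab : a ≤ b := hs.1.trans hs.2
  have hlip := lipschitzOnWith_angle_const hγ hsphere p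
  have hmeas := measurableSet_sep_lt hlip.continuousOn measurableSet_Icc r
  have hac : AbsolutelyContinuousOnInterval (fun x => max (angle (γ x) p) r) a b := by
    rw [← uIcc_of_le hab] at hlip
    exact ((LipschitzWith.id.max_const r).comp_lipschitzOnWith hlip).absolutelyContinuousOnInterval
  have hint : IntervalIntegrable ({x ∈ Icc a b | r < angle (γ x) p}.indicator
      fun x => ‖derivWithin γ (Icc a b) x‖) volume a b := by
    have := FiniteDimensional.complete ℝ E
    rw [intervalIntegrable_iff_integrableOn_Icc_of_le hab]
    exact (integrableOn_norm_derivWithin_Icc hγ).indicator hmeas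
  calc 2 * (R - r)
      ≤ 2 * |max (angle (γ t) p) r - max (angle (γ s) p) r| := by
        rw [max_eq_right hsr]
        gcongr
        exact (sub_le_sub_right (htR.trans (le_max_left _ _)) r).trans (le_abs_self _)
    _ ≤ ∫ x in a..b, {x ∈ Icc a b | r < angle (γ x) p}.indicator
          (fun x => ‖derivWithin γ (Icc a b) x‖) x :=
        two_mul_abs_sub_le_integral_of_eq hac hint (ae_abs_deriv_max_angle_le hγ hsphere p r)
          (by simp only [hclosed]) hs ht
    _ = ∫ x in {x ∈ Icc a b | r < angle (γ x) p}, ‖derivWithin γ (Icc a b) x‖ := by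
        rw [intervalIntegral.integral_of_le hab, ← integral_Icc_eq_integral_Ioc,
          setIntegral_indicator hmeas, inter_eq_right.2 (sep_subset _ _)]

theorem length_outside_circle_ge_pi_general [FiniteDimensional ℝ E]
    (hγ : LipschitzOnWith C γ (Icc a b)) (hsphere : ∀ t ∈ Icc a b, ‖γ t‖ = 1)
    (hclosed : γ a = γ b) (hp : ‖p‖ = 1) (hnear : ∃ t ∈ Icc a b, arccos ⟪p, γ t⟫ ≤ r)
    (hfar : ∃ t ∈ Icc a b, arccos ⟪-p, γ t⟫ ≤ r) :
    2 * (π - 2 * r) ≤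
      ∫ t in {s ∈ Icc a b | r < arccos ⟪γ s, p⟫}, ‖derivWithin γ (Icc a b) t‖ := by
  have hangle : ∀ t ∈ Icc a b, arccos ⟪γ t, p⟫ = angle (γ t) p := fun t ht =>
    (angle_eq_arccos_inner_of_norm_eq_one (hsphere t ht) hp).symm
  have hset : {s ∈ Icc a b | r < arccos ⟪γ s, p⟫} = {s ∈ Icc a b | r < angle (γ s) p} :=
    sep_ext_iff.2 fun t ht => by rw [hangle t ht]
  obtain ⟨s, hs, hsr⟩ := hnear
  obtain ⟨t, ht, htr⟩ := hfar
  rw [real_inner_comm, hangle s hs] at hsr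
  rw [inner_neg_left, arccos_neg, real_inner_comm, hangle t ht] at htr
  have hlength := two_mul_sub_le_length_outside (R := π - r) hγ hsphere hclosed hs ht hsr
    (by linarith)
  rw [hset]
  linarith

end Angle

/-- For a closed constant speed curve on the unit sphere of length `4π/√2` within
spherical distance `π/4` of every point of the sphere, the portion of the curve lying
strictly outside any circle of spherical radius `π/4` has length at least `π`. -/
theorem length_outside_circle_ge_pi
    (a b : ℝ) (hab : a < b) (γ : ℝ → E3) (C : ℝ≥0)
    (hsphere : ∀ t ∈ Set.Icc a b, ‖γ t‖ = 1)
    (hclosed : γ a = γ b)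
    (hspeed : HasConstantSpeedOnWith γ (Set.Icc a b) C)
    (hlen : eVariationOn γ (Set.Icc a b) = ENNReal.ofReal (4 * π / Real.sqrt 2))
    (hcover : ∀ p : E3, ‖p‖ = 1 → ∃ t ∈ Set.Icc a b, Real.arccos ⟪p, γ t⟫ ≤ π / 4) :
    ∀ p : E3, ‖p‖ = 1 →
      π ≤ ∫ t in {s ∈ Set.Icc a b | π / 4 < Real.arccos ⟪γ s, p⟫},
            ‖derivWithin γ (Set.Icc a b) t‖ := by
  intro p hp
  have key := length_outside_circle_ge_pi_general (lipschitzOnWith_of_hasConstantSpeedOnWith hspeed)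
    hsphere hclosed hp (hcover p hp) (hcover (-p) (by rwa [norm_neg]))
  linarith
end
end
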